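/- arXiv:1403.0408 — 4 statements merged into one kernel-verified Lean document; each statement's English description precedes it below -/
import Mathlib

section
/- Let 𝒜 and ℬ be topological spaces, let U ⊆ 𝒜 × ℬ be open, let γ be any type, and let g : 𝒜 → γ and h : ℬ → γ satisfy g(a) = h(b) for every (a,b) ∈ U. If (a,b) ∈ U and (a',b') ∈ U satisfy (a,b) ≈_U (a',b'), then g(a) = g(a') and h(b) = h(b'). -/
/-- The base relation on a subset `S` of a product of topological spaces:
`u ~ v` iff `u, v ∈ S` and (`u` and `v` are joined by a path in `S`, or they share
their first coordinate, or they share their second coordinate). -/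
def CoordPathRel {𝒜 ℬ : Type*} [TopologicalSpace 𝒜] [TopologicalSpace ℬ]
    (S : Set (𝒜 × ℬ)) (u v : 𝒜 × ℬ) : Prop :=
  u ∈ S ∧ v ∈ S ∧ (JoinedIn S u v ∨ u.1 = v.1 ∨ u.2 = v.2)

/-- `≈_S`: the equivalence relation generated by `CoordPathRel S`. -/
def EquivInSupp {𝒜 ℬ : Type*} [TopologicalSpace 𝒜] [TopologicalSpace ℬ]
    (S : Set (𝒜 × ℬ)) : 𝒜 × ℬ → 𝒜 × ℬ → Prop :=
  Relation.EqvGen (CoordPathRel S)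

/-!
For `(a, b) ∈ U` and `a'` near `a`, the point `(a', b)` lies in `U`, so `g a' = h b = g a`: the
function `q ↦ g q.1` is locally constant on `U`, hence constant along paths in `U`. As it equals
`q ↦ h q.2` on `U`, it also takes equal values at points of `U` sharing either coordinate. The
kernel of `q ↦ (g q.1, h q.2)` is thus an equivalence relation containing the generating pairs.
-/

theorem eq_of_joinedIn_of_isLocallyConstant {X γ : Type*} [TopologicalSpace X] {S : Set X}
    {f : X → γ} (hf : IsLocallyConstant (S.domRestrict f)) {x y : X} (hxy : JoinedIn S x y) :
    f x = f y :=
  hf.apply_eq_of_isPreconnected isPreconnected_connectedComponent mem_connectedComponent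
    (pathComponent_subset_component _ hxy.joined_subtype)

section

variable {𝒜 ℬ γ : Type*} [TopologicalSpace 𝒜] [TopologicalSpace ℬ] {U : Set (𝒜 × ℬ)}
  {g : 𝒜 → γ} {h : ℬ → γ}

theorem isLocallyConstant_domRestrict_comp_fst (hU : ∀ b, IsOpen {a | (a, b) ∈ U})
    (hgh : ∀ q ∈ U, g q.1 = h q.2) : IsLocallyConstant (U.domRestrict (g ∘ Prod.fst)) := by
  rw [IsLocallyConstant.iff_eventually_eq]
  rintro ⟨⟨a, b⟩, hab⟩
  have hfst : Continuous fun q : U => q.1.1 := by fun_prop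
  filter_upwards [((hU b).preimage hfst).mem_nhds hab] with q hq
  exact (hgh (q.1.1, b) hq).trans (hgh (a, b) hab).symm

theorem CoordPathRel.apply_eq (hU : ∀ b, IsOpen {a | (a, b) ∈ U})
    (hgh : ∀ q ∈ U, g q.1 = h q.2) {u v : 𝒜 × ℬ} (huv : CoordPathRel U u v) :
    g u.1 = g v.1 ∧ h u.2 = h v.2 := by
  obtain ⟨hu, hv, huv⟩ := huv
  rw [← hgh u hu, ← hgh v hv, and_self]
  rcases huv with hpath | hfst | hsnd
  · exact eq_of_joinedIn_of_isLocallyConstant (isLocallyConstant_domRestrict_comp_fst hU hgh) hpath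
  · rw [hfst]
  · rw [hgh u hu, hgh v hv, hsnd]

theorem statement2_general (hU : ∀ b, IsOpen {a | (a, b) ∈ U})
    (hgh : ∀ q ∈ U, g q.1 = h q.2) {u v : 𝒜 × ℬ} (huv : EquivInSupp U u v) :
    g u.1 = g v.1 ∧ h u.2 = h v.2 := by
  have hle : Relation.EqvGen.setoid (CoordPathRel U) ≤
      Setoid.ker fun q : 𝒜 × ℬ => (g q.1, h q.2) :=
    Setoid.eqvGen_le fun _ _ hxy => Prod.ext_iff.mpr (hxy.apply_eq hU hgh)
  exact Prod.ext_iff.mp (hle huv)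

end

/-- If `U ⊆ 𝒜 × ℬ` is open, `g : 𝒜 → γ` and `h : ℬ → γ` satisfy
`g a = h b` for every `(a,b) ∈ U`, and `(a,b) ≈_U (a',b')` for `(a,b), (a',b') ∈ U`,
then `g a = g a'` and `h b = h b'`. -/
theorem statement2 {𝒜 ℬ : Type*} {γ : Type*} [TopologicalSpace 𝒜] [TopologicalSpace ℬ]
    (U : Set (𝒜 × ℬ)) (hU : IsOpen U)
    (g : 𝒜 → γ) (h : ℬ → γ)
    (hgh : ∀ q ∈ U, g q.1 = h q.2)
    (u v : 𝒜 × ℬ) (hu : u ∈ U) (hv : v ∈ U)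
    (hequiv : EquivInSupp U u v) :
    g u.1 = g v.1 ∧ h u.2 = h v.2 :=
  statement2_general (fun b => hU.preimage (Continuous.prodMk_left b)) hgh hequiv
end

section
/- Let p_X : ℝ^d → ℝ and p_N : ℝ → ℝ be nonnegative functions whose positivity sets {x : p_X(x) > 0} and {n : p_N(n) > 0} are path-connected, and let f : ℝ^d → ℝ be continuous. Then the positivity set {(x,y) ∈ ℝ^d × ℝ : p_X(x) · p_N(y − f(x)) > 0} of the joint density of (X, f(X) + N) is path-connected. Consequently, in a structural equation model X_i = f_i(X_{PA(i)}) + N_i with continuous functions f_i and jointly independent noise variables whose densities have path-connected support, the joint density of (X_1, …, X_p) has path-connected support (by induction along a causal ordering). -/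
/-!
Solving for the noise exhibits each positivity set as a continuous image of a product of
path-connected sets, namely the positivity sets of the independent inputs. For `(X, f(X) + N)` the
map is the shear `(x, n) ↦ (x, n + f x)`. In a structural equation model it is the solution map
`n ↦ x`, obtained by well-founded recursion along the parent relation; each coordinate of the
solution is continuous in the noise because its parents' coordinates are. This recursion plays the
role of the induction along a causal ordering.
-/

lemma mul_pos_iff_of_nonneg {R : Type*} [Preorder R] [MulZeroClass R] [PosMulStrictMono R]
    [PosMulReflectLT R] [MulPosReflectLT R] {a b : R} (ha : 0 ≤ a) (hb : 0 ≤ b) :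
    0 < a * b ↔ 0 < a ∧ 0 < b :=
  ⟨fun h ↦ ⟨pos_of_mul_pos_left h hb, pos_of_mul_pos_right h ha⟩, fun h ↦ mul_pos h.1 h.2⟩

lemma prod_pos_iff_of_nonneg {R : Type*} [PartialOrder R] [CommMonoidWithZero R] [Nontrivial R]
    [ZeroLEOneClass R] [PosMulStrictMono R] {ι : Type*} {s : Finset ι} {a : ι → R}
    (ha : ∀ i ∈ s, 0 ≤ a i) :
    0 < ∏ i ∈ s, a i ↔ ∀ i ∈ s, 0 < a i := by
  refine ⟨fun h i hi ↦ (ha i hi).lt_of_ne' fun hzero ↦ ?_, Finset.prod_pos⟩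
  exact h.ne' (Finset.prod_eq_zero hi hzero)

section Shear

variable {X G : Type*} [AddGroup G]

lemma setOf_sub_mem_eq_image_shear (A : Set X) (B : Set G) (f : X → G) :
    {q : X × G | q.1 ∈ A ∧ q.2 - f q.1 ∈ B} =
      (fun q : X × G ↦ (q.1, q.2 + f q.1)) '' (A ×ˢ B) := by
  ext ⟨x, y⟩
  constructor
  · rintro ⟨hx, hy⟩
    exact ⟨(x, y - f x), ⟨hx, hy⟩, by simp only [sub_add_cancel]⟩
  · rintro ⟨⟨x, n⟩, ⟨hx, hn⟩, ⟨⟩⟩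
    exact ⟨hx, by simpa only [add_sub_cancel_right] using hn⟩

lemma isPathConnected_setOf_sub_mem [TopologicalSpace X] [TopologicalSpace G] [ContinuousAdd G]
    {A : Set X} {B : Set G} {f : X → G} (hA : IsPathConnected A) (hB : IsPathConnected B)
    (hf : ContinuousOn f A) :
    IsPathConnected {q : X × G | q.1 ∈ A ∧ q.2 - f q.1 ∈ B} := by
  rw [setOf_sub_mem_eq_image_shear]
  have hshift : ContinuousOn (fun q : X × G ↦ f q.1) (A ×ˢ B) :=
    hf.comp continuousOn_fst fun _ hq ↦ hq.1
  exact (hA.prod hB).image' (continuousOn_fst.prodMk (continuousOn_snd.add hshift))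

end Shear

section StructuralEquations

variable {ι : Type*} {E : ι → Type*} {PA : ι → Set ι} {f : ∀ i, (∀ j, E j) → E i}

open Classical in
/-- The solution `x` of the structural equations `x i = n i + f i x` with noise `n`, by recursion
along the parent relation `j ∈ PA i`. In the recursive step `f i` is evaluated at the vector that
agrees with the solution on the parents of `i` and is `0` elsewhere, so the equations are only
guaranteed if each `f i` depends on the coordinates in `PA i` alone. -/
noncomputable def structuralSolution [∀ i, AddZeroClass (E i)]
    (hPA : WellFounded fun j i ↦ j ∈ PA i) (f : ∀ i, (∀ j, E j) → E i) (n : ∀ i, E i) : ∀ i, E i :=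
  hPA.fix fun i x ↦ n i + f i fun j ↦ if hj : j ∈ PA i then x j hj else 0

section Solution

variable [∀ i, AddZeroClass (E i)] (hPA : WellFounded fun j i ↦ j ∈ PA i)

open Classical in
lemma structuralSolution_apply_eq_truncated (n : ∀ i, E i) (i : ι) :
    structuralSolution hPA f n i =
      n i + f i fun j ↦ if j ∈ PA i then structuralSolution hPA f n j else 0 :=
  hPA.fix_eq _ i

lemma structuralSolution_apply (hdep : ∀ i, DependsOn (f i) (PA i)) (n : ∀ i, E i) (i : ι) :
    structuralSolution hPA f n i = n i + f i (structuralSolution hPA f n) := by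
  rw [structuralSolution_apply_eq_truncated]
  exact congrArg (n i + ·) (hdep i fun j hj ↦ if_pos hj)

lemma eq_structuralSolution (hdep : ∀ i, DependsOn (f i) (PA i)) {n x : ∀ i, E i}
    (hx : ∀ i, x i = n i + f i x) : x = structuralSolution hPA f n := by
  funext i
  induction i using hPA.induction with
  | _ i ih => rw [hx, structuralSolution_apply hPA hdep, hdep i ih]

lemma continuous_structuralSolution [∀ i, TopologicalSpace (E i)] [∀ i, ContinuousAdd (E i)]
    (hf : ∀ i, Continuous (f i)) : Continuous (structuralSolution hPA f) := by
  classical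
  refine continuous_pi fun i ↦ ?_
  induction i using hPA.induction with
  | _ i ih =>
    simp only [structuralSolution_apply_eq_truncated hPA _ i]
    refine (continuous_apply i).add ((hf i).comp (continuous_pi fun j ↦ ?_))
    split_ifs with hj
    exacts [ih j hj, continuous_const]

end Solution

variable [∀ i, AddGroup (E i)]

lemma setOf_sub_mem_eq_image_structuralSolution (hPA : WellFounded fun j i ↦ j ∈ PA i)
    (hdep : ∀ i, DependsOn (f i) (PA i)) (S : ∀ i, Set (E i)) :
    {x : ∀ i, E i | ∀ i, x i - f i x ∈ S i} = structuralSolution hPA f '' Set.univ.pi S := by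
  ext x
  constructor
  · intro hx
    exact ⟨fun i ↦ x i - f i x, fun i _ ↦ hx i,
      (eq_structuralSolution hPA hdep fun i ↦ (sub_add_cancel (x i) (f i x)).symm).symm⟩
  · rintro ⟨n, hn, rfl⟩ i
    have hnoise : structuralSolution hPA f n i - f i (structuralSolution hPA f n) = n i :=
      sub_eq_of_eq_add (structuralSolution_apply hPA hdep n i)
    exact hnoise ▸ hn i trivial

lemma isPathConnected_setOf_forall_sub_mem [∀ i, TopologicalSpace (E i)]
    [∀ i, ContinuousAdd (E i)] (hPA : WellFounded fun j i ↦ j ∈ PA i)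
    (hf : ∀ i, Continuous (f i)) (hdep : ∀ i, DependsOn (f i) (PA i)) {S : ∀ i, Set (E i)}
    (hS : ∀ i, IsPathConnected (S i)) :
    IsPathConnected {x : ∀ i, E i | ∀ i, x i - f i x ∈ S i} := by
  rw [setOf_sub_mem_eq_image_structuralSolution hPA hdep]
  exact (IsPathConnected.pi hS).image (continuous_structuralSolution hPA hf)

end StructuralEquations

universe u v

theorem statement9_general :
    (∀ {X : Type u} {G : Type v} [TopologicalSpace X] [AddGroup G] [TopologicalSpace G]
        [ContinuousAdd G] {pX : X → ℝ} {pN : G → ℝ} {f : X → G},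
      (∀ x, 0 ≤ pX x) → (∀ n, 0 ≤ pN n) →
      IsPathConnected {x | 0 < pX x} → IsPathConnected {n | 0 < pN n} →
      ContinuousOn f {x | 0 < pX x} →
      IsPathConnected {q : X × G | 0 < pX q.1 * pN (q.2 - f q.1)}) ∧
    (∀ {ι : Type u} [Fintype ι] {E : ι → Type v} [∀ i, AddGroup (E i)]
        [∀ i, TopologicalSpace (E i)] [∀ i, ContinuousAdd (E i)] {PA : ι → Set ι}
        {f : ∀ i, (∀ j, E j) → E i} {pN : ∀ i, E i → ℝ},
      (WellFounded fun j i ↦ j ∈ PA i) →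
      (∀ i, Continuous (f i)) →
      (∀ i, DependsOn (f i) (PA i)) →
      (∀ i n, 0 ≤ pN i n) →
      (∀ i, IsPathConnected {n | 0 < pN i n}) →
      IsPathConnected {x : ∀ i, E i | 0 < ∏ i, pN i (x i - f i x)}) := by
  constructor
  · intro X G _ _ _ _ pX pN f hX hN hcX hcN hf
    simp only [mul_pos_iff_of_nonneg (hX _) (hN _)]
    exact isPathConnected_setOf_sub_mem hcX hcN hf
  · intro ι _ E _ _ _ PA f pN hPA hf hdep hN hcN
    simp only [prod_pos_iff_of_nonneg fun i _ ↦ hN i _, Finset.mem_univ, true_imp_iff]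
    exact isPathConnected_setOf_forall_sub_mem hPA hf hdep hcN

/-- (1) If `p_X : ℝ^d → ℝ` and `p_N : ℝ → ℝ` are nonnegative with
path-connected positivity sets and `f : ℝ^d → ℝ` is continuous, then the positivity set
of the joint density `(x,y) ↦ p_X(x)·p_N(y − f(x))` of `(X, f(X) + N)` is path-connected.
(2) Consequently, in a structural equation model `X_i = f_i(X_{PA(i)}) + N_i` (here with
the identity as a causal ordering, i.e. parents have smaller index) with continuous
functions and independent noises whose densities have path-connected support, the joint
density `x ↦ ∏ i, p_{N_i}(x_i − f_i(x_{PA(i)}))` has path-connected support. -/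
theorem statement9 :
    (∀ (d : ℕ) (pX : (Fin d → ℝ) → ℝ) (pN : ℝ → ℝ) (f : (Fin d → ℝ) → ℝ),
      (∀ x, 0 ≤ pX x) → (∀ n, 0 ≤ pN n) →
      IsPathConnected {x | 0 < pX x} → IsPathConnected {n | 0 < pN n} →
      Continuous f →
      IsPathConnected {q : (Fin d → ℝ) × ℝ | 0 < pX q.1 * pN (q.2 - f q.1)}) ∧
    (∀ (p : ℕ) (PA : Fin p → Finset (Fin p)) (f : Fin p → (Fin p → ℝ) → ℝ)
        (pN : Fin p → ℝ → ℝ),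
      (∀ i j, j ∈ PA i → j < i) →
      (∀ i, Continuous (f i)) →
      (∀ i, ∀ x y : Fin p → ℝ, (∀ j ∈ PA i, x j = y j) → f i x = f i y) →
      (∀ i n, 0 ≤ pN i n) →
      (∀ i, IsPathConnected {n | 0 < pN i n}) →
      IsPathConnected {x : Fin p → ℝ | 0 < ∏ i, pN i (x i - f i x)}) := by
  exact ⟨fun _ _ _ _ hX hN hcX hcN hf ↦ statement9_general.1 hX hN hcX hcN hf.continuousOn,
    fun _ PA _ _ hPA hf hdep ↦ statement9_general.2 (PA := fun i ↦ PA i)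
      (Subrelation.wf (hPA _ _) wellFounded_lt) hf hdep⟩
end

section
/- (Counterexample to the intersection property.) Let p_A := (1/2)·𝟙_{[−2,−1] ∪ [1,2]}, and let u := (5/3)·𝟙_{[−0.3, 0.3]} (the uniform density on [−0.3,0.3]). Let f : ℝ → ℝ be any continuous function with f(b) = 10 for all b > 0.5 and f(b) = 0 for all b < −0.5. Define q : ℝ³ → ℝ by q(a,b,x) := p_A(a) · u(b − a) · u(x − f(b)). Then q is a probability density on ℝ³ (with respect to Lebesgue measure) for variables (A,B,X) which satisfies, in the density sense, X ⊥ A | B and X ⊥ B | A, but neither X ⊥ A nor X ⊥ B; in particular X ⊥ (A,B) fails, so the intersection property fails for q. -/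
/-!
On the support of `p_A(a)·u(b − a)` the numbers `a` and `b` have the same sign and `|b| > 1/2`, so
`f b` is determined by the sign of `a`. The factor `u(x − f b)` can therefore be read as a function
of `(b, x)` or of `(a, x)`: given either of `A` and `B`, the variable `X` is independent of the
other. The common sign still carries information on `X`: at `x = 0` the joint density of `X` with
`A`, or with `B`, is positive at a negative value and zero at a positive value of that variable,
although its own marginal density is positive at both; this is impossible for a product.
-/

open MeasureTheory

/-- The density of `A`: `(1/2)·𝟙_{[−2,−1] ∪ [1,2]}`. -/
noncomputable def pA (a : ℝ) : ℝ :=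
  (1 / 2) * (Set.Icc (-2 : ℝ) (-1) ∪ Set.Icc 1 2).indicator 1 a

/-- The uniform density on `[−0.3, 0.3]`: `(5/3)·𝟙_{[−0.3,0.3]}`. -/
noncomputable def uDen (y : ℝ) : ℝ :=
  (5 / 3) * (Set.Icc (-(0.3 : ℝ)) 0.3).indicator 1 y

theorem density_condIndep_of_eq_mul {α β γ 𝕜 : Type*} [MeasurableSpace α] [MeasurableSpace γ]
    [RCLike 𝕜] {μ : Measure α} {ξ : Measure γ} {q : α → β → γ → 𝕜} {r : α → β → 𝕜} {w : β → γ → 𝕜}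
    (hq : ∀ a b x, q a b x = r a b * w b x) (a : α) (b : β) (x : γ) :
    q a b x * (∫ a', ∫ x', q a' b x' ∂ξ ∂μ) = (∫ a', q a' b x ∂μ) * (∫ x', q a b x' ∂ξ) := by
  simp only [hq, integral_const_mul, integral_mul_const]
  ring

theorem density_indep_fst_of_indep_prod {α β γ 𝕜 : Type*} [MeasurableSpace β] [MeasurableSpace γ]
    [RCLike 𝕜] {ν : Measure β} {ξ : Measure γ} {q : α → β → γ → 𝕜} {m : γ → 𝕜}
    (h : ∀ x a b, q a b x = m x * ∫ x', q a b x' ∂ξ) (x : γ) (a : α) :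
    (∫ b, q a b x ∂ν) = m x * ∫ b, ∫ x', q a b x' ∂ξ ∂ν := by
  rw [← integral_const_mul]
  exact integral_congr_ae (.of_forall (h x a))

theorem not_forall_eq_mul_of_mul_ne_mul {ι κ R : Type*} [CommSemigroup R] {g : ι → κ → R}
    {u : ι → R} {v : κ → R} (i : ι) (j k : κ) (hne : g i j * v k ≠ g i k * v j) :
    ¬ ∀ i j, g i j = u i * v j := by
  intro h
  apply hne
  rw [h, h, mul_right_comm]

section Shear

variable {α G : Type*} [MeasurableSpace α] [AddGroup G] [MeasurableSpace G] [MeasurableAdd G]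
  [MeasurableSub₂ G] {μ : Measure α} {ν : Measure G} [SFinite μ] [SFinite ν]
  [ν.IsAddRightInvariant] {g : α → G}

theorem measurePreserving_prod_sub_comp (hg : Measurable g) :
    MeasurePreserving (fun z : α × G => (z.1, z.2 - g z.1)) (μ.prod ν) (μ.prod ν) :=
  (MeasurePreserving.id μ).skew_product (g := fun a y => y - g a) (by fun_prop)
    (.of_forall fun a => (measurePreserving_sub_right ν (g a)).map_eq)

theorem integral_prod_mul_sub_comp {𝕜 : Type*} [RCLike 𝕜] (hg : Measurable g) {p : α → 𝕜}
    {w : G → 𝕜} (hp : AEStronglyMeasurable p μ) (hw : AEStronglyMeasurable w ν) :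
    (∫ z, p z.1 * w (z.2 - g z.1) ∂μ.prod ν) = (∫ a, p a ∂μ) * ∫ y, w y ∂ν := by
  have hshear := measurePreserving_prod_sub_comp (μ := μ) (ν := ν) hg
  have hpw : AEStronglyMeasurable (fun z : α × G => p z.1 * w z.2) (μ.prod ν) :=
    hp.comp_fst.mul hw.comp_snd
  rw [← integral_prod_mul]
  nth_rw 2 [← hshear.map_eq]
  rw [integral_map hshear.aemeasurable (hshear.map_eq.symm ▸ hpw)]

end Shear

theorem pA_nonneg (a : ℝ) : 0 ≤ pA a :=
  mul_nonneg (by norm_num) (Set.indicator_nonneg (fun _ _ => zero_le_one) a)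

theorem uDen_nonneg (y : ℝ) : 0 ≤ uDen y :=
  mul_nonneg (by norm_num) (Set.indicator_nonneg (fun _ _ => zero_le_one) y)

theorem measurable_pA : Measurable pA :=
  (measurable_one.indicator (measurableSet_Icc.union measurableSet_Icc)).const_mul _

theorem measurable_uDen : Measurable uDen :=
  (measurable_one.indicator measurableSet_Icc).const_mul _

theorem pA_of_mem {a : ℝ} (ha : a ∈ Set.Icc (-2 : ℝ) (-1) ∪ Set.Icc 1 2) : pA a = 1 / 2 := by
  rw [pA, Set.indicator_of_mem ha, Pi.one_apply, mul_one]

theorem pA_of_notMem {a : ℝ} (ha : a ∉ Set.Icc (-2 : ℝ) (-1) ∪ Set.Icc 1 2) : pA a = 0 := by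
  rw [pA, Set.indicator_of_notMem ha, mul_zero]

theorem uDen_of_abs_le {y : ℝ} (hy : |y| ≤ 0.3) : uDen y = 5 / 3 := by
  rw [uDen, Set.indicator_of_mem (Set.mem_Icc.mpr (abs_le.mp hy)), Pi.one_apply, mul_one]

theorem uDen_of_lt_abs {y : ℝ} (hy : 0.3 < |y|) : uDen y = 0 := by
  rw [uDen, Set.indicator_of_notMem (fun h => hy.not_ge (abs_le.mpr (Set.mem_Icc.mp h))), mul_zero]

theorem integral_pA : ∫ a, pA a = 1 := by
  have hdisj : Disjoint (Set.Icc (-2 : ℝ) (-1)) (Set.Icc 1 2) :=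
    Set.disjoint_left.mpr fun a h h' => by linarith [h.2, h'.1]
  simp only [pA]
  rw [integral_const_mul, integral_indicator_one (measurableSet_Icc.union measurableSet_Icc),
    measureReal_union hdisj measurableSet_Icc measure_Icc_lt_top.ne measure_Icc_lt_top.ne,
    Real.volume_real_Icc_of_le (by norm_num), Real.volume_real_Icc_of_le (by norm_num)]
  norm_num

theorem integral_uDen : ∫ y, uDen y = 1 := by
  simp only [uDen]
  rw [integral_const_mul, integral_indicator_one measurableSet_Icc,
    Real.volume_real_Icc_of_le (by norm_num)]
  norm_num

theorem integral_uDen_sub_right (c : ℝ) : ∫ y, uDen (y - c) = 1 := by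
  rw [integral_sub_right_eq_self uDen c, integral_uDen]

theorem integral_uDen_sub_left (c : ℝ) : ∫ y, uDen (c - y) = 1 := by
  rw [integral_sub_left_eq_self uDen volume c, integral_uDen]

theorem integral_pA_mul_uDen_sub {b : ℝ}
    (hb : Set.Icc (b - 0.3) (b + 0.3) ⊆ Set.Icc (-2 : ℝ) (-1) ∪ Set.Icc 1 2) :
    ∫ a, pA a * uDen (b - a) = 1 / 2 := by
  have hconst : ∀ a, pA a * uDen (b - a) = 1 / 2 * uDen (b - a) := by
    intro a
    rcases le_or_gt |b - a| 0.3 with hnear | hfar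
    · obtain ⟨hl, hr⟩ := abs_le.mp hnear
      rw [pA_of_mem (hb ⟨by linarith, by linarith⟩)]
    · rw [uDen_of_lt_abs hfar, mul_zero, mul_zero]
  simp only [hconst, integral_const_mul, integral_uDen_sub_left, mul_one]

/-- The joint density of `(A, B, X)`, where `A` has density `pA` and `B - A`, `X - f B` are
independent of `A` and of each other with density `uDen`. -/
noncomputable def jointDensity (f : ℝ → ℝ) (a b x : ℝ) : ℝ :=
  pA a * uDen (b - a) * uDen (x - f b)

/-- The constraints on `f`: it is constant on each side of the window `[-0.5, 0.5]`, which `B`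
almost surely avoids. -/
structure HasPlateaus (f : ℝ → ℝ) : Prop where
  eq_ten : ∀ b : ℝ, b > 0.5 → f b = 10
  eq_zero : ∀ b : ℝ, b < -0.5 → f b = 0

/-- The step function `10 · 𝟙_{(0, ∞)}`, which expresses `f B` through `A` alone: `f B = step A`
almost surely. -/
noncomputable def step : ℝ → ℝ :=
  (Set.Ioi 0).indicator fun _ => 10

theorem measurable_step : Measurable step :=
  measurable_const.indicator measurableSet_Ioi

theorem step_of_pos {a : ℝ} (ha : 0 < a) : step a = 10 :=
  Set.indicator_of_mem ha _

theorem step_of_nonpos {a : ℝ} (ha : a ≤ 0) : step a = 0 :=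
  Set.indicator_of_notMem (Set.notMem_Ioi.mpr ha) _

section JointDensity

variable {f : ℝ → ℝ}

theorem jointDensity_nonneg (a b x : ℝ) : 0 ≤ jointDensity f a b x :=
  mul_nonneg (mul_nonneg (pA_nonneg _) (uDen_nonneg _)) (uDen_nonneg _)

theorem integral_jointDensity_right (a b : ℝ) :
    ∫ x, jointDensity f a b x = pA a * uDen (b - a) := by
  simp only [jointDensity, integral_const_mul, integral_uDen_sub_right, mul_one]

theorem integral_integral_jointDensity_right (a : ℝ) :
    ∫ b, ∫ x, jointDensity f a b x = pA a := by
  simp only [integral_jointDensity_right, integral_const_mul, integral_uDen_sub_right, mul_one]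

theorem integral_jointDensity_left (b x : ℝ) :
    ∫ a, jointDensity f a b x = (∫ a, pA a * uDen (b - a)) * uDen (x - f b) :=
  integral_mul_const _ _

theorem jointDensity_condIndep_given_snd (a b x : ℝ) :
    jointDensity f a b x * (∫ a', ∫ x', jointDensity f a' b x')
      = (∫ a', jointDensity f a' b x) * ∫ x', jointDensity f a b x' :=
  density_condIndep_of_eq_mul (q := jointDensity f) (r := fun a b => pA a * uDen (b - a))
    (w := fun b x => uDen (x - f b)) (fun _ _ _ => rfl) a b x

theorem HasPlateaus.eq_step (hf : HasPlateaus f) {a b : ℝ}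
    (ha : a ∈ Set.Icc (-2 : ℝ) (-1) ∪ Set.Icc 1 2) (hb : |b - a| ≤ 0.3) : f b = step a := by
  obtain ⟨hl, hr⟩ := abs_le.mp hb
  norm_num at hl hr
  rcases ha with ⟨-, hneg⟩ | ⟨hpos, -⟩
  · rw [hf.eq_zero b (by norm_num; linarith), step_of_nonpos (by linarith)]
  · rw [hf.eq_ten b (by norm_num; linarith), step_of_pos (by linarith)]

theorem jointDensity_eq_step (hf : HasPlateaus f) (a b x : ℝ) :
    jointDensity f a b x = pA a * uDen (b - a) * uDen (x - step a) := by
  rw [jointDensity]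
  by_cases ha : a ∈ Set.Icc (-2 : ℝ) (-1) ∪ Set.Icc 1 2
  · rcases le_or_gt |b - a| 0.3 with hnear | hfar
    · rw [hf.eq_step ha hnear]
    · simp only [uDen_of_lt_abs hfar, mul_zero, zero_mul]
  · simp only [pA_of_notMem ha, zero_mul]

theorem measurable_jointDensity (hf : HasPlateaus f) :
    Measurable fun v : ℝ × ℝ × ℝ => jointDensity f v.1 v.2.1 v.2.2 := by
  have := measurable_pA
  have := measurable_uDen
  have := measurable_step
  simp only [jointDensity_eq_step hf]
  fun_prop

theorem integral_jointDensity (hf : HasPlateaus f) :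
    ∫ v : ℝ × ℝ × ℝ, jointDensity f v.1 v.2.1 v.2.2 = 1 := by
  have := measurable_uDen
  have hnoise : Measurable fun y : ℝ × ℝ => uDen y.1 * uDen y.2 := by fun_prop
  calc ∫ v : ℝ × ℝ × ℝ, jointDensity f v.1 v.2.1 v.2.2
      = ∫ v : ℝ × ℝ × ℝ, pA v.1 * (uDen (v.2.1 - v.1) * uDen (v.2.2 - step v.1)) := by
        simp only [jointDensity_eq_step hf, mul_assoc]
    _ = (∫ a, pA a) * ∫ y : ℝ × ℝ, uDen y.1 * uDen y.2 :=
        integral_prod_mul_sub_comp (measurable_id.prodMk measurable_step)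
          measurable_pA.aestronglyMeasurable hnoise.aestronglyMeasurable
    _ = (∫ a, pA a) * ((∫ b, uDen b) * ∫ x, uDen x) := by
        rw [Measure.volume_eq_prod, integral_prod_mul]
    _ = 1 := by rw [integral_pA, integral_uDen, mul_one, mul_one]

theorem integral_jointDensity_mid (hf : HasPlateaus f) (a x : ℝ) :
    ∫ b, jointDensity f a b x = pA a * uDen (x - step a) := by
  simp only [jointDensity_eq_step hf, integral_mul_const, integral_const_mul,
    integral_uDen_sub_right, mul_one]

theorem jointDensity_condIndep_given_fst (hf : HasPlateaus f) (a b x : ℝ) :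
    jointDensity f a b x * (∫ b', ∫ x', jointDensity f a b' x')
      = (∫ b', jointDensity f a b' x) * ∫ x', jointDensity f a b x' :=
  density_condIndep_of_eq_mul (q := fun b a x => jointDensity f a b x)
    (r := fun b a => pA a * uDen (b - a)) (w := fun a x => uDen (x - step a))
    (fun b a x => jointDensity_eq_step hf a b x) b a x

theorem jointDensity_not_indep_fst (hf : HasPlateaus f) (m : ℝ → ℝ) :
    ¬ ∀ x a, (∫ b, jointDensity f a b x) = m x * ∫ b, ∫ x', jointDensity f a b x' := by
  refine not_forall_eq_mul_of_mul_ne_mul 0 (-1) 1 ?_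
  rw [integral_jointDensity_mid hf, integral_jointDensity_mid hf,
    integral_integral_jointDensity_right, integral_integral_jointDensity_right,
    step_of_nonpos (by norm_num), step_of_pos one_pos, pA_of_mem (.inl (by norm_num)),
    pA_of_mem (.inr (by norm_num)), uDen_of_abs_le (by norm_num), uDen_of_lt_abs (by norm_num)]
  norm_num

theorem jointDensity_not_indep_snd (hf : HasPlateaus f) (m : ℝ → ℝ) :
    ¬ ∀ x b, (∫ a, jointDensity f a b x) = m x * ∫ a, ∫ x', jointDensity f a b x' := by
  have hneg : ∫ a, pA a * uDen (-3 / 2 - a) = 1 / 2 :=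
    integral_pA_mul_uDen_sub
      ((Set.Icc_subset_Icc (by norm_num) (by norm_num)).trans Set.subset_union_left)
  have hpos : ∫ a, pA a * uDen (3 / 2 - a) = 1 / 2 :=
    integral_pA_mul_uDen_sub
      ((Set.Icc_subset_Icc (by norm_num) (by norm_num)).trans Set.subset_union_right)
  refine not_forall_eq_mul_of_mul_ne_mul 0 (-3 / 2) (3 / 2) ?_
  simp only [integral_jointDensity_left, integral_jointDensity_right]
  rw [hneg, hpos, hf.eq_zero _ (by norm_num), hf.eq_ten _ (by norm_num),
    uDen_of_abs_le (by norm_num), uDen_of_lt_abs (by norm_num)]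
  norm_num

end JointDensity

theorem statement12_general (f : ℝ → ℝ)
    (hf10 : ∀ b : ℝ, b > 0.5 → f b = 10)
    (hf0 : ∀ b : ℝ, b < -0.5 → f b = 0)
    (q : ℝ → ℝ → ℝ → ℝ)
    (hq : ∀ a b x, q a b x = pA a * uDen (b - a) * uDen (x - f b)) :
    (∀ a b x, 0 ≤ q a b x) ∧
    Measurable (fun v : ℝ × ℝ × ℝ => q v.1 v.2.1 v.2.2) ∧
    (∫ v : ℝ × ℝ × ℝ, q v.1 v.2.1 v.2.2) = 1 ∧
    (∀ x a b, 0 < (∫ a', ∫ x', q a' b x') →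
      q a b x * (∫ a', ∫ x', q a' b x')
        = (∫ a', q a' b x) * (∫ x', q a b x')) ∧
    (∀ x a b, 0 < (∫ b', ∫ x', q a b' x') →
      q a b x * (∫ b', ∫ x', q a b' x')
        = (∫ b', q a b' x) * (∫ x', q a b x')) ∧
    ¬ (∀ x a, (∫ b', q a b' x)
        = (∫ a', ∫ b', q a' b' x) * (∫ b', ∫ x', q a b' x')) ∧
    ¬ (∀ x b, (∫ a', q a' b x)
        = (∫ a', ∫ b', q a' b' x) * (∫ a', ∫ x', q a' b x')) ∧
    ¬ (∀ x a b, q a b x = (∫ a', ∫ b', q a' b' x) * (∫ x', q a b x')) := by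
  obtain rfl : q = jointDensity f := funext₃ hq
  have hf : HasPlateaus f := ⟨hf10, hf0⟩
  have hXA := jointDensity_not_indep_fst hf
  have hXB := jointDensity_not_indep_snd hf
  exact ⟨jointDensity_nonneg, measurable_jointDensity hf, integral_jointDensity hf,
    fun x a b _ => jointDensity_condIndep_given_snd a b x,
    fun x a b _ => jointDensity_condIndep_given_fst hf a b x,
    hXA _, hXB _, fun h => hXA _ (density_indep_fst_of_indep_prod h)⟩

/-- Counterexample to the intersection property. For any continuous
`f : ℝ → ℝ` with `f = 10` on `(0.5, ∞)` and `f = 0` on `(−∞, −0.5)`, the function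
`q(a,b,x) = p_A(a)·u(b−a)·u(x−f(b))` is a probability density on `ℝ³` for `(A,B,X)`
which satisfies `X ⊥ A | B` and `X ⊥ B | A`, but neither `X ⊥ A` nor `X ⊥ B`;
in particular `X ⊥ (A,B)` fails. -/
theorem statement12 (f : ℝ → ℝ) (hf : Continuous f)
    (hf10 : ∀ b : ℝ, b > 0.5 → f b = 10)
    (hf0 : ∀ b : ℝ, b < -0.5 → f b = 0)
    (q : ℝ → ℝ → ℝ → ℝ)
    (hq : ∀ a b x, q a b x = pA a * uDen (b - a) * uDen (x - f b)) :
    (∀ a b x, 0 ≤ q a b x) ∧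
    Measurable (fun v : ℝ × ℝ × ℝ => q v.1 v.2.1 v.2.2) ∧
    (∫ v : ℝ × ℝ × ℝ, q v.1 v.2.1 v.2.2) = 1 ∧
    -- X ⊥ A | B
    (∀ x a b, 0 < (∫ a', ∫ x', q a' b x') →
      q a b x * (∫ a', ∫ x', q a' b x')
        = (∫ a', q a' b x) * (∫ x', q a b x')) ∧
    -- X ⊥ B | A
    (∀ x a b, 0 < (∫ b', ∫ x', q a b' x') →
      q a b x * (∫ b', ∫ x', q a b' x')
        = (∫ b', q a b' x) * (∫ x', q a b x')) ∧
    -- ¬ (X ⊥ A)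
    ¬ (∀ x a, (∫ b', q a b' x)
        = (∫ a', ∫ b', q a' b' x) * (∫ b', ∫ x', q a b' x')) ∧
    -- ¬ (X ⊥ B)
    ¬ (∀ x b, (∫ a', q a' b x)
        = (∫ a', ∫ b', q a' b' x) * (∫ a', ∫ x', q a' b x')) ∧
    -- ¬ (X ⊥ (A,B))
    ¬ (∀ x a b, q a b x = (∫ a', ∫ b', q a' b' x) * (∫ x', q a b x')) :=
  statement12_general f hf10 hf0 q hq
end

section
/- Let 𝒜, ℬ be metric spaces, let p : 𝒜 × ℬ → ℝ be continuous and nonnegative, and let U := {(a,b) : p(a,b) > 0}. Suppose (a,b), (a',b') ∈ U are joined by a path lying in U. Then there exists a finite sequence (a,b) = (a_0,b_0), (a_1,b_1), …, (a_n,b_n) = (a',b') of points of U together with points (a_1*, b_1*), …, (a_n*, b_n*) such that for each k: p(a_k*, b_{k−1}) > 0, p(a_k*, b_k*) > 0, and p(a_k, b_k*) > 0; i.e. consecutive points of the sequence can be linked through points of U by changing one coordinate at a time. -/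
/-!
If `x` lies in an open set `U` of a product and `y` is close to `x`, then the mixed points
`(x.1, y.2)` and `(y.1, x.2)` lie in `U` as well, so `x` itself serves as the intermediate point
both from `x` to `y` and from `y` to `x`. Being joined by a finite chain of such links is therefore
a transitive relation that holds, in both directions, between nearby points of `U`, and
connectedness replaces the choice of a finite subcover of the path.
-/

open Topology
open scoped SetRel

lemma exists_relSeries_of_eventually_rel {X : Type*} [TopologicalSpace X] [PreconnectedSpace X]
    {r : SetRel X X} (hr : ∀ x, ∀ᶠ y in 𝓝 x, x ~[r] y ∧ y ~[r] x) (x y : X) :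
    ∃ s : RelSeries r, s.head = x ∧ s.last = y := by
  have of_rel {a b : X} (hab : a ~[r] b) : ∃ s : RelSeries r, s.head = a ∧ s.last = b :=
    ⟨(RelSeries.singleton r b).cons a hab, RelSeries.head_cons _ _ _, RelSeries.last_cons _ _ _⟩
  refine PreconnectedSpace.induction₂' (fun a b ↦ ∃ s : RelSeries r, s.head = a ∧ s.last = b)
    (fun a ↦ (hr a).mono fun b hab ↦ ⟨of_rel hab.1, of_rel hab.2⟩) ⟨?_⟩ x y
  rintro a b c ⟨s, hsa, hsb⟩ ⟨t, htb, htc⟩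
  have hst : s.last = t.head := hsb.trans htb.symm
  exact ⟨s.smash t hst, (RelSeries.head_smash hst).trans hsa, (RelSeries.last_smash hst).trans htc⟩

lemma mem_connectedComponentIn_of_joinedIn {X : Type*} [TopologicalSpace X] {U : Set X} {x y : X}
    (h : JoinedIn U x y) : y ∈ connectedComponentIn U x :=
  (isPathConnected_pathComponentIn h.source_mem).isConnected.isPreconnected
    |>.subset_connectedComponentIn (mem_pathComponentIn_self h.source_mem)
      pathComponentIn_subset h

/-- One link of a chain in `U ⊆ α × β`: the pair `(x, y)` is related if, for some `z`, the points
`(z.1, x.2)`, `z` and `(y.1, z.2)`, through which one passes from `x` to `y` by changing one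
coordinate at a time, lie in `U`. The endpoints `x` and `y` themselves are not required to. -/
def coordinateLink {α β : Type*} (U : Set (α × β)) : SetRel (α × β) (α × β) :=
  {(x, y) | ∃ z : α × β, (z.1, x.2) ∈ U ∧ z ∈ U ∧ (y.1, z.2) ∈ U}

section

variable {α β : Type*} [TopologicalSpace α] [TopologicalSpace β] {U : Set (α × β)}

lemma eventually_coordinateLink (hU : IsOpen U) {x : α × β} (hx : x ∈ U) :
    ∀ᶠ y in 𝓝 x, x ~[coordinateLink U] y ∧ y ~[coordinateLink U] x := by
  have hfst : ∀ᶠ y in 𝓝 x, (y.1, x.2) ∈ U :=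
    (by fun_prop : Continuous fun y : α × β ↦ (y.1, x.2)).continuousAt.eventually_mem
      (hU.mem_nhds hx)
  have hsnd : ∀ᶠ y in 𝓝 x, (x.1, y.2) ∈ U :=
    (by fun_prop : Continuous fun y : α × β ↦ (x.1, y.2)).continuousAt.eventually_mem
      (hU.mem_nhds hx)
  filter_upwards [hfst, hsnd] with y hyfst hysnd
  exact ⟨⟨x, hx, hx, hyfst⟩, ⟨x, hysnd, hx, hx⟩⟩

theorem statement14_general (hU : IsOpen U) {u v : α × β} (hv : v ∈ connectedComponentIn U u) :
    ∃ (n : ℕ) (w : Fin (n + 1) → α × β) (wstar : Fin n → α × β),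
      w 0 = u ∧ w (Fin.last n) = v ∧ (∀ k, w k ∈ U) ∧
      ∀ k : Fin n,
        ((wstar k).1, (w k.castSucc).2) ∈ U ∧
        wstar k ∈ U ∧
        ((w k.succ).1, (wstar k).2) ∈ U := by
  let C := connectedComponentIn U u
  have hCU : C ⊆ U := connectedComponentIn_subset U u
  have hu : u ∈ C := mem_connectedComponentIn (connectedComponentIn_nonempty_iff.mp ⟨v, hv⟩)
  have : PreconnectedSpace C := Subtype.preconnectedSpace isPreconnected_connectedComponentIn
  let link : SetRel C C := {(x, y) | x.1 ~[coordinateLink U] y.1}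
  have eventually_link (x : C) : ∀ᶠ y in 𝓝 x, x ~[link] y ∧ y ~[link] x :=
    continuous_subtype_val.continuousAt.eventually (eventually_coordinateLink hU (hCU x.2))
  obtain ⟨s, hsu, hsv⟩ := exists_relSeries_of_eventually_rel eventually_link ⟨u, hu⟩ ⟨v, hv⟩
  choose wstar hwstar using s.step
  exact ⟨s.length, fun k ↦ s k, wstar, congrArg Subtype.val hsu, congrArg Subtype.val hsv,
    fun k ↦ hCU (s k).2, hwstar⟩

end

/-- Finite-chain covering argument. If `p : 𝒜 × ℬ → ℝ` is continuous and
nonnegative and two points of `U = {p > 0}` are joined by a path in `U`, then they can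
be linked by a finite sequence of points of `U` such that consecutive points are
connected through intermediate points of `U` by changing one coordinate at a time. -/
theorem statement14 {𝒜 ℬ : Type*} [MetricSpace 𝒜] [MetricSpace ℬ]
    (p : 𝒜 × ℬ → ℝ) (hcont : Continuous p) (hnn : ∀ q, 0 ≤ p q)
    (U : Set (𝒜 × ℬ)) (hUdef : U = {q | 0 < p q})
    (u v : 𝒜 × ℬ) (hu : u ∈ U) (hv : v ∈ U)
    (hjoin : JoinedIn U u v) :
    ∃ (n : ℕ) (w : Fin (n + 1) → 𝒜 × ℬ) (wstar : Fin n → 𝒜 × ℬ),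
      w 0 = u ∧ w (Fin.last n) = v ∧ (∀ k, w k ∈ U) ∧
      ∀ k : Fin n,
        0 < p ((wstar k).1, (w k.castSucc).2) ∧
        0 < p (wstar k) ∧
        0 < p ((w k.succ).1, (wstar k).2) := by
  subst hUdef
  exact statement14_general (isOpen_lt continuous_const hcont)
    (mem_connectedComponentIn_of_joinedIn hjoin)
end
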